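/- (Companion version of the RBBG identity.) For every real p with 0 ≤ p < 1, one has ₂F₁(1/3, 2/3; 1; β̃(p)) = γ̃(p) · ₂F₁(1/2, 1/2; 1; α(p)), where β̃(p) := 27p(1+p)⁴/(2(1+4p+p²)³) and γ̃(p) := (1+4p+p²)/√(1+2p). (For such p both α(p) and β̃(p) lie in [0,1), so both hypergeometric series converge absolutely.) -/

import Mathlib

open Real

/-- Gauss hypergeometric function ₂F₁ defined via its power series
    (the tsum; converges absolutely for |z| < 1). -/
noncomputable def hyp2F1 (a b c z : ℝ) : ℝ :=
  ∑' n : ℕ, ((ascPochhammer ℝ n).eval a * (ascPochhammer ℝ n).eval b /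
      (ascPochhammer ℝ n).eval c) * z ^ n / (Nat.factorial n)

noncomputable def α (p : ℝ) : ℝ := p ^ 3 * (2 + p) / (1 + 2 * p)

noncomputable def βt (p : ℝ) : ℝ := 27 * p * (1 + p) ^ 4 / (2 * (1 + 4 * p + p ^ 2) ^ 3)

noncomputable def γt (p : ℝ) : ℝ := (1 + 4 * p + p ^ 2) / Real.sqrt (1 + 2 * p)

lemma aux_summable (c : ℕ → ℝ) (hc : ∀ n, |c n| ≤ 1) {x : ℝ} (hx : |x| < 1) :
    Summable (fun n => c n * x ^ n) := by
  apply Summable.of_norm_bounded (summable_geometric_of_lt_one (abs_nonneg x) hx)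
  intro n
  rw [norm_mul, norm_pow, Real.norm_eq_abs, Real.norm_eq_abs]
  exact mul_le_of_le_one_left (by positivity) (hc n)

lemma aux_deriv (c : ℕ → ℝ) (hc : ∀ n, |c n| ≤ 1) {x : ℝ} (hx : |x| < 1) :
    Summable (fun n : ℕ => c n * (n * x ^ (n - 1))) ∧
    HasDerivAt (fun y => ∑' n, c n * y ^ n) (∑' n : ℕ, c n * (n * x ^ (n - 1))) x := by
  obtain ⟨r, hxr, hr1⟩ := exists_between hx
  have hr0 : 0 < r := lt_of_le_of_lt (abs_nonneg x) hxr
  have hu : Summable (fun n : ℕ => (n : ℝ) * r ^ (n - 1)) := by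
    have h := summable_pow_mul_geometric_of_norm_lt_one (R := ℝ) 1
      (r := r) (by rwa [Real.norm_eq_abs, abs_of_pos hr0])
    have h2 := h.mul_left r⁻¹
    refine h2.congr ?_
    intro n
    cases n with
    | zero => simp
    | succ k => simp only [Nat.add_sub_cancel, pow_succ]; field_simp
  have hb : ∀ n : ℕ, ∀ y ∈ Metric.ball (0:ℝ) r, ‖c n * ((n:ℝ) * y ^ (n - 1))‖ ≤ n * r ^ (n-1) := by
    intro n y hy
    have hy' : |y| ≤ r := by
      have := Metric.mem_ball.1 hy
      rw [Real.dist_eq, sub_zero] at this; exact this.le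
    rw [norm_mul, norm_mul, norm_pow, Real.norm_eq_abs, Real.norm_eq_abs, Real.norm_eq_abs,
      Nat.abs_cast]
    calc |c n| * (n * |y| ^ (n-1)) ≤ 1 * (n * r ^ (n-1)) := by
          gcongr
          exact hc n
      _ = _ := one_mul _
  have hxm : x ∈ Metric.ball (0:ℝ) r := by
    rw [Metric.mem_ball, Real.dist_eq, sub_zero]; exact hxr
  refine ⟨Summable.of_norm_bounded hu (fun n => hb n x hxm), ?_⟩
  refine hasDerivAt_tsum_of_isPreconnected (t := Metric.ball (0:ℝ) r) (y₀ := x) hu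
    Metric.isOpen_ball (convex_ball (0:ℝ) r).isPreconnected ?_ hb hxm (aux_summable c hc hx) hxm
  intro n y _
  exact (hasDerivAt_pow n y).const_mul (c n)

noncomputable def hc (a b : ℝ) (n : ℕ) : ℝ :=
  (ascPochhammer ℝ n).eval a * (ascPochhammer ℝ n).eval b /
      (ascPochhammer ℝ n).eval 1 / (Nat.factorial n)

lemma hc_zero (a b : ℝ) : hc a b 0 = 1 := by simp [hc]

lemma hc_succ (a b : ℝ) (n : ℕ) :
    hc a b (n+1) * (n+1)^2 = hc a b n * ((a + n) * (b + n)) := by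
  unfold hc
  simp only [ascPochhammer_succ_eval, Nat.factorial_succ, ascPochhammer_eval_one]
  have : (Nat.factorial n : ℝ) ≠ 0 := by positivity
  have h2 : (n:ℝ) + 1 ≠ 0 := by positivity
  have h3 : (1:ℝ) + n ≠ 0 := by positivity
  push_cast
  field_simp
  ring

lemma hc_bd (a b : ℝ) (ha : 0 < a) (hb : 0 < b) (hab : a + b = 1) (n : ℕ) :
    0 < hc a b n ∧ hc a b n ≤ 1 := by
  induction n with
  | zero => simp [hc_zero]
  | succ n ih =>
    have h := hc_succ a b n
    have hn : (0:ℝ) ≤ n := by positivity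
    have hk : hc a b (n+1) = hc a b n * ((a + n) * (b + n) / (n+1)^2) := by
      field_simp
      linarith
    have h1 : (a + n) * (b + n) / ((n:ℝ)+1)^2 ≤ 1 := by
      rw [div_le_one (by positivity)]
      nlinarith
    rw [hk]
    refine ⟨mul_pos ih.1 (by positivity), ?_⟩
    exact mul_le_one₀ ih.2 (by positivity) h1

lemma hyp_eq (a b x : ℝ) : hyp2F1 a b 1 x = ∑' n, hc a b n * x ^ n := by
  unfold hyp2F1 hc
  congr 1; ext n; ring

lemma hyp_main (a b : ℝ) (ha : 0 < a) (hb : 0 < b) (hab : a + b = 1) :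
    ∃ F1 A : ℝ → ℝ, (∀ x, |x| < 1 → HasDerivAt (hyp2F1 a b 1) (F1 x) x ∧
      HasDerivAt A (a * b * hyp2F1 a b 1 x) x ∧ A x = x * (1 - x) * F1 x ∧
      (0 ≤ x → 0 < hyp2F1 a b 1 x)) ∧ hyp2F1 a b 1 0 = 1 := by
  have hbd := hc_bd a b ha hb hab
  have hc1 : ∀ n, |hc a b n| ≤ 1 := fun n => by
    rw [abs_of_pos (hbd n).1]; exact (hbd n).2
  let d : ℕ → ℝ := fun n => n.casesOn 0 (fun k => a * b * hc a b k / (k + 1))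
  have d0 : d 0 = 0 := rfl
  have ds : ∀ k, d (k+1) = a * b * hc a b k / (k + 1) := fun k => rfl
  have hd1 : ∀ n, |d n| ≤ 1 := by
    intro n
    cases n with
    | zero => simp [d0]
    | succ k =>
      have hab1 : a * b ≤ 1 := by nlinarith
      have h1 : a * b * hc a b k ≤ 1 := mul_le_one₀ hab1 (hbd k).1.le (hbd k).2
      have h0 : 0 ≤ a * b * hc a b k := mul_nonneg (by positivity) (hbd k).1.le
      rw [ds, abs_of_nonneg (by positivity), div_le_one (by positivity)]
      have : (0:ℝ) ≤ k := by positivity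
      linarith
  have hfun : hyp2F1 a b 1 = fun x => ∑' n, hc a b n * x ^ n := by
    ext x; exact hyp_eq a b x
  refine ⟨fun x => ∑' n : ℕ, hc a b n * (n * x ^ (n - 1)), fun x => ∑' n, d n * x ^ n, ?_, ?_⟩
  · intro x hx
    obtain ⟨s1, e1⟩ := aux_deriv _ hc1 hx
    obtain ⟨s2, e2⟩ := aux_deriv _ hd1 hx
    have sF := aux_summable _ hc1 hx
    have sA := aux_summable _ hd1 hx
    refine ⟨by rw [hfun]; exact e1, ?_, ?_, ?_⟩
    · convert e2 using 1
      rw [hyp_eq, s2.tsum_eq_zero_add, ← tsum_mul_left]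
      simp only [d0, zero_mul, zero_add]
      congr 1; ext n
      rw [ds, Nat.add_sub_cancel]
      have : (n:ℝ) + 1 ≠ 0 := by positivity
      push_cast
      field_simp
    · show ∑' n, d n * x ^ n = x * (1 - x) * ∑' n : ℕ, hc a b n * (n * x ^ (n - 1))
      have key : ∀ n, d n * x ^ n = x * (hc a b n * (n * x ^ (n - 1)))
          - (if n = 0 then 0 else x^2 * (hc a b (n-1) * ((n-1 : ℕ) * x ^ ((n-1) - 1)))) := by
        intro n
        cases n with
        | zero => simp [d0]
        | succ k =>
          rw [ds]
          have hk : (k:ℝ) + 1 ≠ 0 := by positivity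
          have h := hc_succ a b k
          have hb' : b = 1 - a := by linarith
          have hd : a * b * hc a b k / (k + 1) = hc a b (k+1) * (k+1) - k * hc a b k := by
            field_simp
            linear_combination -h - hc a b k * k * hab
          rw [hd]
          cases k with
          | zero => simp [mul_comm]
          | succ m =>
            simp only [Nat.add_sub_cancel, Nat.succ_ne_zero, if_false]
            push_cast
            ring
      have s3 : Summable (fun n : ℕ => (if n = 0 then (0:ℝ) else
          x^2 * (hc a b (n-1) * ((n-1 : ℕ) * x ^ ((n-1) - 1))))) := by
        rw [← summable_nat_add_iff 1]
        simpa using s1.mul_left (x^2)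
      rw [tsum_congr key, (s1.mul_left x).tsum_sub s3, s3.tsum_eq_zero_add]
      simp only [Nat.add_sub_cancel, Nat.succ_ne_zero, if_false, if_true, zero_add]
      rw [tsum_mul_left, tsum_mul_left]
      ring
    · intro hx0
      rw [hyp_eq]
      refine sF.tsum_pos (fun n => mul_nonneg (hbd n).1.le (pow_nonneg hx0 n)) 0 ?_
      simp [hc_zero]
  · rw [hyp_eq, tsum_eq_single 0]
    · simp [hc_zero]
    · intro n hn; simp [hn]

/-- Companion version of the RBBG identity. -/
theorem RBBG_companion (p : ℝ) (hp0 : 0 ≤ p) (hp1 : p < 1) :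
    hyp2F1 (1/3) (2/3) 1 (βt p) = γt p * hyp2F1 (1/2) (1/2) 1 (α p) := by
  obtain ⟨F1, B, hF, hF0⟩ := hyp_main (1/3) (2/3) (by norm_num) (by norm_num) (by norm_num)
  obtain ⟨G1, A, hG, hG0⟩ := hyp_main (1/2) (1/2) (by norm_num) (by norm_num) (by norm_num)
  generalize hyp2F1 (1/3) (2/3) 1 = F at *
  generalize hyp2F1 (1/2) (1/2) 1 = G at *
  have hβ1 : ∀ t : ℝ, 0 ≤ t → 1 - βt t =
      (1-t)^4*(1+2*t)*(2+t) / (2 * (1 + 4 * t + t ^ 2) ^ 3) := by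
    intro t ht
    have : 1 + 4 * t + t ^ 2 ≠ 0 := by positivity
    unfold βt; field_simp; ring
  have hα1 : ∀ t : ℝ, 0 ≤ t → 1 - α t = (1-t)*(1+t)^3/(1+2*t) := by
    intro t ht
    have : 1 + 2 * t ≠ 0 := by positivity
    unfold α; field_simp; ring
  have hβr : ∀ t : ℝ, 0 ≤ t → t < 1 → 0 ≤ βt t ∧ |βt t| < 1 := by
    intro t ht ht1
    have h0 : 0 ≤ βt t := by unfold βt; positivity
    have h1 : 0 < 1 - βt t := by
      rw [hβ1 t ht]
      have : 0 < 1 - t := by linarith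
      positivity
    exact ⟨h0, by rw [abs_of_nonneg h0]; linarith⟩
  have hαr : ∀ t : ℝ, 0 ≤ t → t < 1 → 0 ≤ α t ∧ |α t| < 1 := by
    intro t ht ht1
    have h0 : 0 ≤ α t := by unfold α; positivity
    have h1 : 0 < 1 - α t := by
      rw [hα1 t ht]
      have : 0 < 1 - t := by linarith
      positivity
    exact ⟨h0, by rw [abs_of_nonneg h0]; linarith⟩
  have dD : ∀ t : ℝ, HasDerivAt (fun t : ℝ => 1 + 4 * t + t^2) (4 + 2 * t) t := by
    intro t
    have := (((hasDerivAt_id t).const_mul 4).const_add 1).add (hasDerivAt_pow 2 t)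
    refine HasDerivAt.congr_deriv this ?_
    simp
  have dE : ∀ t : ℝ, HasDerivAt (fun t : ℝ => 1 + 2 * t) 2 t := by
    intro t
    have := (((hasDerivAt_id t).const_mul 2).const_add 1)
    refine HasDerivAt.congr_deriv this ?_
    simp
  have dβ : ∀ t : ℝ, 0 ≤ t → HasDerivAt βt
      (27 * (1+t)^3*(1-t)^3/(2 * (1 + 4 * t + t ^ 2) ^ 4)) t := by
    intro t ht
    have hD : 1 + 4 * t + t ^ 2 ≠ 0 := by positivity
    have := (((hasDerivAt_id t).const_mul 27).mul (((hasDerivAt_id t).const_add 1).pow 4)).div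
      (((dD t).pow 3).const_mul 2) (by simp; positivity)
    refine HasDerivAt.congr_deriv this ?_
    simp
    field_simp
    ring
  have dα : ∀ t : ℝ, 0 ≤ t → HasDerivAt α (6*t^2*(1+t)^2/(1+2*t)^2) t := by
    intro t ht
    have hD : 1 + 2 * t ≠ 0 := by positivity
    have := (((hasDerivAt_pow 3 t)).mul (((hasDerivAt_id t).const_add 2))).div (dE t) hD
    refine HasDerivAt.congr_deriv this ?_
    simp
    field_simp
    ring
  have dT : ∀ t : ℝ, 0 ≤ t → HasDerivAt
      (fun t : ℝ => 3*t*(1+t)^3*(1-t)*(2+t)/(2*(1 + 4 * t + t ^ 2)^2))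
      (((3*(1+t)^3*(1-t)*(2+t) + 9*t*(1+t)^2*(1-t)*(2+t) - 3*t*(1+t)^3*(2+t) + 3*t*(1+t)^3*(1-t))
        * (1 + 4 * t + t ^ 2) - 2 * (3*t*(1+t)^3*(1-t)*(2+t)) * (4 + 2 * t))
         / (2*(1 + 4 * t + t ^ 2)^3)) t := by
    intro t ht
    have hD : 1 + 4 * t + t ^ 2 ≠ 0 := by positivity
    have := (((((hasDerivAt_id t).const_mul 3).mul (((hasDerivAt_id t).const_add 1).pow 3)).mul
      ((hasDerivAt_id t).const_sub 1)).mul ((hasDerivAt_id t).const_add 2)).div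
      (((dD t).pow 2).const_mul 2) (by simp; positivity)
    refine HasDerivAt.congr_deriv this ?_
    simp
    field_simp
    ring
  have ds : ∀ t : ℝ, 0 ≤ t → HasDerivAt (fun t : ℝ => √(1+2*t)) (1/√(1+2*t)) t := by
    intro t ht
    refine HasDerivAt.congr_deriv ((dE t).sqrt (by positivity)) ?_
    have : √(1+2*t) ≠ 0 := by positivity
    field_simp
  let V : ℝ → ℝ := fun t => F (βt t) * (3*t*(1+t)^3*(1-t)*(2+t)/(2*(1 + 4 * t + t ^ 2)^2) * G (α t)
    + 3 * ((1+2*t)/(1 + 4 * t + t ^ 2)) * A (α t)) - B (βt t) * ((1 + 4 * t + t ^ 2) * G (α t))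
  have dFβ : ∀ t : ℝ, 0 ≤ t → t < 1 → HasDerivAt (fun t => F (βt t)) _ t := fun t h0 h1 =>
    (hF _ (hβr t h0 h1).2).1.comp t (dβ t h0)
  have dBβ : ∀ t : ℝ, 0 ≤ t → t < 1 → HasDerivAt (fun t => B (βt t)) _ t := fun t h0 h1 =>
    (hF _ (hβr t h0 h1).2).2.1.comp t (dβ t h0)
  have dGα : ∀ t : ℝ, 0 ≤ t → t < 1 → HasDerivAt (fun t => G (α t)) _ t := fun t h0 h1 =>
    (hG _ (hαr t h0 h1).2).1.comp t (dα t h0)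
  have dAα : ∀ t : ℝ, 0 ≤ t → t < 1 → HasDerivAt (fun t => A (α t)) _ t := fun t h0 h1 =>
    (hG _ (hαr t h0 h1).2).2.1.comp t (dα t h0)
  have dV : ∀ t : ℝ, 0 ≤ t → t < 1 → HasDerivAt V (V t / (1+2*t)) t := by
    intro t h0 h1
    have hD : 1 + 4 * t + t ^ 2 ≠ 0 := by positivity
    have hE : 1 + 2 * t ≠ 0 := by positivity
    have := ((dFβ t h0 h1).mul (((dT t h0).mul (dGα t h0 h1)).add
      ((((dE t).div (dD t) hD).const_mul 3).mul (dAα t h0 h1)))).sub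
      ((dBβ t h0 h1).mul ((dD t).mul (dGα t h0 h1)))
    refine HasDerivAt.congr_deriv this ?_
    simp only [V, Pi.mul_apply, Pi.add_apply, Pi.div_apply]
    have eA := (hG _ (hαr t h0 h1).2).2.2.1
    have eB := (hF _ (hβr t h0 h1).2).2.2.1
    rw [hα1 t h0] at eA
    rw [hβ1 t h0] at eB
    rw [eA, eB]
    generalize F (βt t) = f
    generalize F1 (βt t) = f1
    generalize G (α t) = g
    generalize G1 (α t) = g1
    unfold α βt
    field_simp
    ring
  have hW : ∀ t : ℝ, 0 ≤ t → t < 1 → V t = 0 := by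
    intro t h0 h1
    have dW : ∀ u : ℝ, 0 ≤ u → u < 1 → HasDerivAt (fun u => V u / √(1+2*u)) 0 u := by
      intro u h0 h1
      have hs : √(1+2*u) ≠ 0 := by positivity
      have hs2 : √(1+2*u)^2 = 1+2*u := Real.sq_sqrt (by positivity)
      refine HasDerivAt.congr_deriv ((dV u h0 h1).div (ds u h0) hs) ?_
      generalize √(1+2*u) = s at *
      rw [← hs2]
      field_simp
      simp
    have := constant_of_has_deriv_right_zero (f := fun u => V u / √(1+2*u)) (a := 0) (b := t)
      (fun u hu => (dW u hu.1 (lt_of_le_of_lt hu.2 h1)).continuousAt.continuousWithinAt)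
      (fun u hu => (dW u hu.1 (hu.2.trans h1)).hasDerivWithinAt) t ⟨h0, le_rfl⟩
    have e0 : V 0 = 0 := by
      have eA := (hG 0 (by simp)).2.2.1
      have eB := (hF 0 (by simp)).2.2.1
      have ha : α 0 = 0 := by simp [α]
      have hb : βt 0 = 0 := by simp [βt]
      simp only [V, ha, hb, eA, eB]
      simp
    simp only [e0, zero_div] at this
    have hs : √(1+2*t) ≠ 0 := by positivity
    exact (div_eq_zero_iff.1 this).resolve_right hs
  rcases hp0.eq_or_lt with rfl | hp
  · simp [α, βt, γt, hF0, hG0]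
  have dq : ∀ t : ℝ, 0 ≤ t → t < 1 → HasDerivAt
      (fun t => ((1 + 4 * t + t ^ 2) * G (α t)) / (√(1+2*t) * F (βt t))) _ t := fun t h0 h1 =>
    ((dD t).mul (dGα t h0 h1)).div ((ds t h0).mul (dFβ t h0 h1)) (by
      have h3 : √(1+2*t) ≠ 0 := by positivity
      exact mul_ne_zero h3 ((hF _ (hβr t h0 h1).2).2.2.2 (hβr t h0 h1).1).ne')
  obtain ⟨t, ht, hslope⟩ := exists_hasDerivAt_eq_slope _ _ hp
    (fun u hu => (dq u hu.1 (lt_of_le_of_lt hu.2 hp1)).continuousAt.continuousWithinAt)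
    (fun u hu => dq u hu.1.le (hu.2.trans hp1))
  have hz : ((4 + 2 * t) * G (α t) + (1 + 4 * t + t ^ 2) *
      (G1 (α t) * (6*t^2*(1+t)^2/(1+2*t)^2))) * (√(1+2*t) * F (βt t)) -
      ((1 + 4 * t + t ^ 2) * G (α t)) * (1/√(1+2*t) * F (βt t) + √(1+2*t) *
       (F1 (βt t) * (27 * (1+t)^3*(1-t)^3/(2 * (1 + 4 * t + t ^ 2) ^ 4)))) = 0 := by
    have h0 := ht.1.le
    have h1 := ht.2.trans hp1
    have hv := hW t h0 h1
    have hs : √(1+2*t) ≠ 0 := by positivity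
    have hs2 : √(1+2*t)^2 = 1+2*t := Real.sq_sqrt (by positivity)
    have hD : 1 + 4 * t + t ^ 2 ≠ 0 := by positivity
    have hE : 1 + 2 * t ≠ 0 := by positivity
    have ht0 : t ≠ 0 := ht.1.ne'
    have ht1 : 1 - t ≠ 0 := by linarith
    have ht2 : 1 + t ≠ 0 := by positivity
    have ht3 : 2 + t ≠ 0 := by positivity
    simp only [V] at hv
    have eA := (hG _ (hαr t h0 h1).2).2.2.1
    have eB := (hF _ (hβr t h0 h1).2).2.2.1
    rw [hα1 t h0] at eA
    rw [hβ1 t h0] at eB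
    rw [eA, eB] at hv
    generalize F (βt t) = f at *
    generalize F1 (βt t) = f1 at *
    generalize G (α t) = g at *
    generalize G1 (α t) = g1 at *
    unfold α βt at hv
    have hfac : t*(1+t)*(1-t)*(2+t) * (((4 + 2 * t) * g + (1 + 4 * t + t ^ 2) *
      (g1 * (6*t^2*(1+t)^2/(1+2*t)^2))) * ((1+2*t) * f) -
      ((1 + 4 * t + t ^ 2) * g) * (f + (1+2*t) *
       (f1 * (27 * (1+t)^3*(1-t)^3/(2 * (1 + 4 * t + t ^ 2) ^ 4))))) = 0 := by
      have hv' := congrArg (fun z => 2 * (1 + 4 * t + t ^ 2)^2 * z) hv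
      simp only [mul_zero] at hv'
      rw [← hv']
      field_simp
      ring
    have hfac2 := (mul_eq_zero.1 hfac).resolve_left (by
      exact mul_ne_zero (mul_ne_zero (mul_ne_zero ht0 ht2) ht1) ht3)
    have : ∀ X Y Z : ℝ, X * (√(1+2*t) * f) - Y * (1/√(1+2*t) * f + √(1+2*t) * Z) =
        (X * ((1+2*t) * f) - Y * (f + (1+2*t) * Z)) / √(1+2*t) := by
      intro X Y Z
      field_simp
      rw [hs2]
    rw [this, hfac2, zero_div]
  have hq : (1 + 4 * p + p ^ 2) * G (α p) / (√(1+2*p) * F (βt p)) = 1 := by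
    have ha : α 0 = 0 := by simp [α]
    have hb : βt 0 = 0 := by simp [βt]
    simp only [Pi.mul_apply] at hslope
    rw [hz, zero_div] at hslope
    have := hslope.symm
    rw [div_eq_zero_iff] at this
    have h2 := this.resolve_right (by linarith)
    simp [ha, hb, hF0, hG0] at h2
    linarith
  have hFp : F (βt p) ≠ 0 := ((hF _ (hβr p hp0 hp1).2).2.2.2 (hβr p hp0 hp1).1).ne'
  have hs : √(1+2*p) ≠ 0 := by positivity
  unfold γt
  rw [div_eq_one_iff_eq (mul_ne_zero hs hFp)] at hq
  rw [div_mul_eq_mul_div, hq]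
  field_simp
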